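/- Under the standing assumptions (C braided monoidal with coequalizers preserved by the monoidal product, composites of regular epimorphisms regular epi; (A,t₁,t₂,t₃,t₄,e₁,e₂,j) a regular weak multiplier bimonoid with m a regular epimorphism, non-degenerate with respect to a class 𝒴 containing I, A and L; n₁ non-degenerate on the right with respect to 𝒴), the base object L is a module over the semigroup A via the action p∘n₂ : A⊗L → L; that is, p∘n₂ is associative ((p∘n₂)∘(m⊗1) = (p∘n₂)∘(1⊗(p∘n₂))), a regular epimorphism, and non-degenerate on the left with respect to 𝒴. -/

import Mathlib

open CategoryTheory Category MonoidalCategory Limits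

universe v u

namespace WeakMultiplierBimonoid

variable {C : Type u} [Category.{v} C] [MonoidalCategory C] [BraidedCategory C]

def wl {A : C} (f : A ⊗ A ⟶ A ⊗ A) : A ⊗ (A ⊗ A) ⟶ A ⊗ (A ⊗ A) :=
  (α_ A A A).inv ≫ (f ▷ A) ≫ (α_ A A A).hom

def ml {A : C} (f : A ⊗ A ⟶ A) : A ⊗ (A ⊗ A) ⟶ A ⊗ A :=
  (α_ A A A).inv ≫ (f ▷ A)

def NdLeftOn {Z V W : C} (v : Z ⊗ V ⟶ W) (𝒴 : Set C) : Prop :=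
  ∀ (X : C), ∀ Y ∈ 𝒴, Function.Injective
    (fun g : X ⟶ V ⊗ Y => (Z ◁ g) ≫ (α_ Z V Y).inv ≫ (v ▷ Y))

def NdRightOn {Z V W : C} (v : Z ⊗ V ⟶ W) (𝒴 : Set C) : Prop :=
  NdLeftOn ((β_ V Z).hom ≫ v) 𝒴

/-- The "middle braiding" `1 ⊗ c ⊗ 1 : A⁴ ⟶ A⁴` on `(A ⊗ A) ⊗ (A ⊗ A)`. -/
def midSw (A : C) : (A ⊗ A) ⊗ (A ⊗ A) ⟶ (A ⊗ A) ⊗ (A ⊗ A) :=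
  (α_ A A (A ⊗ A)).hom ≫ (A ◁ (α_ A A A).inv) ≫ (A ◁ ((β_ A A).hom ▷ A)) ≫
    (A ◁ (α_ A A A).hom) ≫ (α_ A A (A ⊗ A)).inv

/-- A regular weak multiplier bimonoid on an object `A` of a braided monoidal category,
with multiplication non-degenerate with respect to the class `𝒴`
(Definition 2.9 of the paper). -/
structure RWMB (A : C) (𝒴 : Set C) where
  t₁ : A ⊗ A ⟶ A ⊗ A
  t₂ : A ⊗ A ⟶ A ⊗ A
  t₃ : A ⊗ A ⟶ A ⊗ A
  t₄ : A ⊗ A ⟶ A ⊗ A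
  e₁ : A ⊗ A ⟶ A ⊗ A
  e₂ : A ⊗ A ⟶ A ⊗ A
  j : A ⟶ 𝟙_ C
  /-- the induced multiplication -/
  m : A ⊗ A ⟶ A
  /-- counit condition (m1); in particular `m` is the induced multiplication -/
  hm₁ : m = t₁ ≫ (j ▷ A) ≫ (λ_ A).hom
  /-- counit condition (m2) -/
  hm₂ : m = t₂ ≫ (A ◁ j) ≫ (ρ_ A).hom
  /-- counit condition (m3) -/
  hm₃ : m = (β_ A A).hom ≫ t₃ ≫ (j ▷ A) ≫ (λ_ A).hom
  /-- counit condition (m4) -/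
  hm₄ : m = (β_ A A).hom ≫ t₄ ≫ (A ◁ j) ≫ (ρ_ A).hom
  /-- the class `𝒴` contains the monoidal unit -/
  memI : (𝟙_ C) ∈ 𝒴
  memA : A ∈ 𝒴
  memAA : (A ⊗ A) ∈ 𝒴
  /-- `m` is non-degenerate on the left with respect to `𝒴` -/
  ndl : NdLeftOn m 𝒴
  /-- `m` is non-degenerate on the right with respect to `𝒴` -/
  ndr : NdRightOn m 𝒴
  /-- relation (c12) -/
  hc12 : (A ◁ t₁) ≫ ml m = wl t₂ ≫ (A ◁ m)
  /-- relation (c13) -/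
  hc13 : wl t₁ ≫ (A ◁ (β_ A A).hom) ≫ (A ◁ m)
    = (A ◁ (β_ A A).hom) ≫ wl t₃ ≫ (A ◁ m)
  /-- relation (c14) -/
  hc14 : (A ◁ t₁) ≫ wl (β_ A A).hom ≫ ml m = wl t₄ ≫ (A ◁ m)
  /-- relation (c23) -/
  hc23 : wl t₂ ≫ (A ◁ (β_ A A).hom) ≫ (A ◁ m) = (A ◁ t₃) ≫ ml m
  /-- relation (c24) -/
  hc24 : (A ◁ t₂) ≫ wl (β_ A A).hom ≫ ml m = wl (β_ A A).hom ≫ (A ◁ t₄) ≫ ml m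
  /-- relation (c34) -/
  hc34 : (A ◁ t₃) ≫ wl (β_ A A).hom ≫ ml m = wl t₄ ≫ (A ◁ (β_ A A).hom) ≫ (A ◁ m)
  /-- interchange relation for `(t₂, t₁)` -/
  hi21 : (A ◁ t₁) ≫ wl t₂ = wl t₂ ≫ (A ◁ t₁)
  /-- interchange relation for `(t₄, t₁)` -/
  hi41 : (A ◁ t₁) ≫ wl t₄ = wl t₄ ≫ (A ◁ t₁)
  /-- interchange relation for `(t₂, t₃)` -/
  hi23 : (A ◁ t₃) ≫ wl t₂ = wl t₂ ≫ (A ◁ t₃)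
  /-- interchange relation for `(t₄, t₃)` -/
  hi43 : (A ◁ t₃) ≫ wl t₄ = wl t₄ ≫ (A ◁ t₃)
  /-- compatibility of the idempotents `e₁`, `e₂`:
  `(m ⊗ m) ∘ (1 ⊗ c ⊗ 1) ∘ (1 ⊗ 1 ⊗ e₁) = (m ⊗ m) ∘ (1 ⊗ c ⊗ 1) ∘ (e₂ ⊗ 1 ⊗ 1)` -/
  hecomp : ((A ⊗ A) ◁ e₁) ≫ midSw A ≫ (m ▷ (A ⊗ A)) ≫ (A ◁ m)
    = (e₂ ▷ (A ⊗ A)) ≫ midSw A ≫ (m ▷ (A ⊗ A)) ≫ (A ◁ m)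
  /-- Axiom I for the weakly counital fusion morphism `(t₁, e₁, j)` -/
  ax1 : (A ◁ t₁) ≫ wl (β_ A A).hom ≫ (A ◁ t₁) ≫ wl (β_ A A).inv ≫ wl t₁
    = wl t₁ ≫ (A ◁ t₁)
  /-- Axiom II -/
  ax2 : e₁ ≫ e₁ = e₁
  /-- Axiom III -/
  ax3 : t₁ ≫ e₁ = t₁
  /-- Axiom IV -/
  ax4 : (A ◁ e₁) ≫ (A ◁ (β_ A A).inv) ≫ wl t₁ ≫ (A ◁ (β_ A A).hom) ≫ ml m
    = (A ◁ (β_ A A).inv) ≫ wl t₁ ≫ (A ◁ (β_ A A).hom) ≫ ml m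
  /-- Axiom V -/
  ax5 : (A ◁ t₁) ≫ wl e₁ = wl e₁ ≫ (A ◁ t₁)
  /-- Axiom VI -/
  ax6 : wl t₁ ≫ (A ◁ e₁)
    = (A ◁ (β_ A A).inv) ≫ wl e₁ ≫ (A ◁ (β_ A A).hom) ≫ wl t₁
  /-- Axiom VII -/
  ax7 : wl t₁ ≫ (A ◁ ((j ▷ A) ≫ (λ_ A).hom)) ≫ m
    = (A ◁ (β_ A A).hom) ≫ (A ◁ e₁) ≫ (A ◁ ((A ◁ j) ≫ (ρ_ A).hom)) ≫ m
  /-- Axiom VIII -/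
  ax8 : wl t₁ ≫ (A ◁ (β_ A A).hom) ≫ ml m ≫ (j ▷ A) ≫ (λ_ A).hom
    = (A ◁ (β_ A A).hom) ≫ (A ◁ e₁) ≫ (A ◁ ((j ▷ A) ≫ (λ_ A).hom)) ≫ m

namespace RWMB

variable {A : C} {𝒴 : Set C} (S : RWMB A 𝒴)

/-- `⊓ᴸ₁ := (j ⊗ 1) ∘ e₁`. -/
def piL1 : A ⊗ A ⟶ A := S.e₁ ≫ (S.j ▷ A) ≫ (λ_ A).hom

/-- `⊓ᴸ₂ := (j ⊗ 1) ∘ t₄ ∘ c`. -/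
def piL2 : A ⊗ A ⟶ A := (β_ A A).hom ≫ S.t₄ ≫ (S.j ▷ A) ≫ (λ_ A).hom

/-- `⊓̄ᴿ₁ ∘ c⁻¹ = (1 ⊗ j) ∘ e₁`, the second leg of the coequalizer defining the base
object. -/
def piBarR1c : A ⊗ A ⟶ A := S.e₁ ≫ (A ◁ S.j) ≫ (ρ_ A).hom

end RWMB

/-!
Write `ab` for `m (a ⊗ b)` and `d₁ ⊗ d₂c` for `t₁ (d ⊗ c)`. Axiom VIII says that
`d ⊓ᴸ₁(z ⊗ c) = j(d₁z) d₂c`. Relation (c14) identifies the right-hand side with `⊓ᴸ₂(d ⊗ z) c`, so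
`⊓ᴸ₂` is left `A`-linear; since also `j ⊓ᴸ₂(a ⊗ b) = j(ab)`, Axiom VIII and the non-degeneracy of
`n₁` force `p ⊓ᴸ₂ = p m`. The action on `L` is therefore the quotient along `p` of the regular
action of `A` on itself, which gives associativity and regular epimorphy.

For non-degeneracy, let `⟨a, l⟩ = j n₂(a ⊗ l)`. As `⟨ab, l⟩ = ⟨a, b · l⟩` and `m` is epi, the action
on an element of `L` determines its pairings, and these determine
`d n₁(l ⊗ c) = ⟨d₁, l⟩ d₂c`, hence the element itself.
-/

section RegularEpi

variable {D E : Type*} [Category* D] [Category* E]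

theorem isRegularEpi_map (F : D ⥤ E) [PreservesColimitsOfShape WalkingParallelPair F]
    {X Y : D} (f : X ⟶ Y) [IsRegularEpi f] : IsRegularEpi (F.map f) :=
  ⟨⟨Cofork.IsColimit.regularEpi <|
    isColimitCoforkMapOfIsColimit F (IsRegularEpi.w f) (IsRegularEpi.isColimit f)⟩⟩

theorem isRegularEpi_of_existsUnique {W X Y : D} {f g : W ⟶ X} {p : X ⟶ Y} (w : f ≫ p = g ≫ p)
    (hp : ∀ {Z : D} (h : X ⟶ Z), f ≫ h = g ≫ h → ∃! k : Y ⟶ Z, p ≫ k = h) : IsRegularEpi p :=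
  ⟨⟨Cofork.IsColimit.regularEpi (c := Cofork.ofπ p w) <|
    Cofork.IsColimit.ofExistsUnique fun s ↦ hp s.π s.condition⟩⟩

theorem isRegularEpi_of_comp {X Y Z : D} (f : X ⟶ Y) (g : Y ⟶ Z) [Epi f]
    [IsRegularEpi (f ≫ g)] : IsRegularEpi g := by
  let r := IsRegularEpi.getStruct (f ≫ g)
  have hw : (r.left ≫ f) ≫ g = (r.right ≫ f) ≫ g := by simpa using r.w
  refine isRegularEpi_of_existsUnique hw fun h hh ↦ ?_
  obtain ⟨k, hk, huniq⟩ := Cofork.IsColimit.existsUnique r.isColimit (f ≫ h) (by simpa using hh)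
  refine ⟨k, by simpa [← cancel_epi f] using hk, fun k' hk' ↦ huniq k' ?_⟩
  simpa using congrArg (f ≫ ·) hk'

end RegularEpi

section NonDegenerate

omit [BraidedCategory C]

variable {Z V W X Y : C} {𝒴 : Set C}

/-- The map `z ⊗ x ↦ v (z ⊗ x') ⊗ x''`, where `g x = x' ⊗ x''`: the action `v` of `Z` on the first
leg of `g`. Non-degeneracy of `v` on the left says that it determines `g`. -/
def actFst (v : Z ⊗ V ⟶ W) (g : X ⟶ V ⊗ Y) : Z ⊗ X ⟶ W ⊗ Y :=
  (Z ◁ g) ≫ (α_ Z V Y).inv ≫ (v ▷ Y)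

theorem NdLeftOn.actFst_injective {v : Z ⊗ V ⟶ W} (hv : NdLeftOn v 𝒴) (hY : Y ∈ 𝒴) :
    Function.Injective (actFst v : (X ⟶ V ⊗ Y) → _) :=
  hv X Y hY

theorem NdLeftOn.hom_ext {v : Z ⊗ V ⟶ W} (hv : NdLeftOn v 𝒴) (hI : 𝟙_ C ∈ 𝒴) {f g : X ⟶ V}
    (h : Z ◁ f ≫ v = Z ◁ g ≫ v) : f = g := by
  have actFst_unit (k : X ⟶ V) : actFst v (k ≫ (ρ_ V).inv) = (Z ◁ k ≫ v) ≫ (ρ_ W).inv := by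
    simp [actFst]
  rw [← cancel_mono (ρ_ V).inv]
  apply hv.actFst_injective hI
  rw [actFst_unit, actFst_unit, h]

theorem actFst_whiskerRight_comp {Z' : C} (f : Z' ⟶ Z) (v : Z ⊗ V ⟶ W) (g : X ⟶ V ⊗ Y) :
    actFst (f ▷ V ≫ v) g = f ▷ X ≫ actFst v g := by
  simp [actFst, ← whisker_exchange_assoc]

theorem actFst_actFst {Z' W' : C} (u : Z' ⊗ W ⟶ W') (v : Z ⊗ V ⟶ W) (g : X ⟶ V ⊗ Y) :
    actFst u (actFst v g) = (α_ Z' Z X).inv ≫ actFst ((α_ Z' Z V).hom ≫ Z' ◁ v ≫ u) g := by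
  simp [actFst]

end NonDegenerate

theorem NdRightOn.hom_ext {Z V W X : C} {v : Z ⊗ V ⟶ W} {𝒴 : Set C} (hv : NdRightOn v 𝒴)
    (hI : 𝟙_ C ∈ 𝒴) {f g : X ⟶ Z} (h : f ▷ V ≫ v = g ▷ V ≫ v) : f = g :=
  NdLeftOn.hom_ext hv hI <| by
    simp only [BraidedCategory.braiding_naturality_right_assoc, h]

omit [BraidedCategory C] in
theorem comp_balanced_of_epi {M L W : C} {μ : M ⊗ M ⟶ M}
    (hμ : M ◁ μ ≫ μ = (α_ M M M).inv ≫ μ ▷ M ≫ μ) {p : M ⟶ L} [Epi ((M ⊗ M) ◁ p)]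
    {a : M ⊗ L ⟶ L} (ha : M ◁ p ≫ a = μ ≫ p) {u : M ⊗ L ⟶ W} {k : M ⟶ W}
    (hu : M ◁ p ≫ u = μ ≫ k) : M ◁ a ≫ u = (α_ M M L).inv ≫ μ ▷ L ≫ u := by
  rw [← cancel_epi (α_ M M L).hom, ← cancel_epi ((M ⊗ M) ◁ p)]
  calc (M ⊗ M) ◁ p ≫ (α_ M M L).hom ≫ M ◁ a ≫ u
      = (α_ M M M).hom ≫ M ◁ (M ◁ p ≫ a) ≫ u := by simp
    _ = (α_ M M M).hom ≫ M ◁ μ ≫ μ ≫ k := by simp [ha, hu]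
    _ = μ ▷ M ≫ μ ≫ k := by rw [reassoc_of% hμ, Iso.hom_inv_id_assoc]
    _ = (M ⊗ M) ◁ p ≫ (α_ M M L).hom ≫ (α_ M M L).inv ≫ μ ▷ L ≫ u := by
      rw [Iso.hom_inv_id_assoc, whisker_exchange_assoc, hu]

section Legs

variable {A B A' B' D D' L X Y : C}

/-- The morphism `f¹³`: `f` acting on the first and third legs. -/
def legs₁₃ (f : A ⊗ B ⟶ A' ⊗ B') (D : C) : A ⊗ (D ⊗ B) ⟶ A' ⊗ (D ⊗ B') :=
  (A ◁ (β_ B D).inv) ≫ (α_ A B D).inv ≫ (f ▷ D) ≫ (α_ A' B' D).hom ≫ (A' ◁ (β_ B' D).hom)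

theorem legs₁₃_naturality (f : A ⊗ B ⟶ A' ⊗ B') (g : D ⟶ D') :
    A ◁ g ▷ B ≫ legs₁₃ f D' = legs₁₃ f D ≫ A' ◁ g ▷ B' := by
  have hinv : A ◁ g ▷ B ≫ A ◁ (β_ B D').inv = A ◁ (β_ B D).inv ≫ A ◁ B ◁ g := by
    simp only [← whiskerLeft_comp, BraidedCategory.braiding_inv_naturality_left]
  have hhom : A' ◁ B' ◁ g ≫ A' ◁ (β_ B' D').hom = A' ◁ (β_ B' D).hom ≫ A' ◁ g ▷ B' := by
    simp only [← whiskerLeft_comp, BraidedCategory.braiding_naturality_right]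
  simp only [legs₁₃, assoc]
  rw [reassoc_of% hinv, associator_inv_naturality_right_assoc, whisker_exchange_assoc,
    associator_naturality_right_assoc, hhom]

theorem legs₁₃_eq_conj (f : A ⊗ B ⟶ A' ⊗ B') (D : C) :
    legs₁₃ f D = (α_ A D B).inv ≫ (β_ A D).hom ▷ B ≫ (α_ D A B).hom ≫ D ◁ f ≫
      (α_ D A' B').inv ≫ (β_ A' D).inv ▷ B' ≫ (α_ A' D B').hom := by
  have hβ := BraidedCategory.braiding_naturality_left f D
  simp only [BraidedCategory.braiding_tensor_left_hom] at hβ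
  rw [legs₁₃, ← cancel_epi (A ◁ (β_ B D).hom), ← cancel_epi (α_ A B D).hom,
    ← cancel_mono (α_ A' D B').inv, ← cancel_mono ((β_ A' D).hom ▷ B'),
    ← cancel_mono (α_ D A' B').hom]
  simpa using hβ

theorem legs₁₃_eq_wl (f : A ⊗ A ⟶ A ⊗ A) :
    legs₁₃ f A = wl (β_ A A).hom ≫ A ◁ f ≫ wl (β_ A A).inv := by
  simp [wl, legs₁₃_eq_conj]

omit [BraidedCategory C] in
theorem wl_comp_whiskerLeft_comp_counit (f : A ⊗ A ⟶ A ⊗ A) (g : A ⊗ A ⟶ A) (k : A ⟶ 𝟙_ C) :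
    wl f ≫ A ◁ g ≫ k ▷ A ≫ (λ_ A).hom = ml (f ≫ k ▷ A ≫ (λ_ A).hom) ≫ g := by
  simp [wl, ml, whisker_exchange_assoc]

/-- The map `(a ⊗ b) ⊗ l ↦ u (a ⊗ l) b`. -/
def pairPast (u : A ⊗ L ⟶ 𝟙_ C) (B : C) : (A ⊗ B) ⊗ L ⟶ B :=
  (α_ A B L).hom ≫ A ◁ (β_ B L).hom ≫ (α_ A L B).inv ≫ u ▷ B ≫ (λ_ B).hom

theorem actFst_pairPast (u : A ⊗ L ⟶ 𝟙_ C) (B : C) (g : X ⟶ L ⊗ Y) :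
    actFst (pairPast u B) g = (α_ A B X).hom ≫ A ◁ (β_ B X).hom ≫ (α_ A X B).inv ≫
      (actFst u g ≫ (λ_ Y).hom) ▷ B ≫ (β_ B Y).inv := by
  have hg : A ◁ (β_ B X).hom ≫ (α_ A X B).inv ≫ (A ◁ g) ▷ B
      = A ◁ B ◁ g ≫ A ◁ (β_ B (L ⊗ Y)).hom ≫ (α_ A (L ⊗ Y) B).inv := by
    rw [← whiskerLeft_comp_assoc, BraidedCategory.braiding_naturality_right]
    simp
  have hu : (A ◁ (α_ L Y B).inv) ≫ (α_ A (L ⊗ Y) B).inv ≫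
      (((α_ A L Y).inv ≫ u ▷ Y ≫ (λ_ Y).hom) ▷ B)
      = (α_ A L (Y ⊗ B)).inv ≫ u ▷ (Y ⊗ B) ≫ (λ_ (Y ⊗ B)).hom := by
    monoidal
  have hβ : A ◁ L ◁ (β_ B Y).hom ≫ (α_ A L (Y ⊗ B)).inv ≫ u ▷ (Y ⊗ B) ≫ (λ_ (Y ⊗ B)).hom
      = (α_ A L (B ⊗ Y)).inv ≫ u ▷ (B ⊗ Y) ≫ (λ_ (B ⊗ Y)).hom ≫ (β_ B Y).hom := by
    rw [associator_inv_naturality_right_assoc, whisker_exchange_assoc, leftUnitor_naturality]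
  simp only [actFst, pairPast, assoc, comp_whiskerRight _ _ B] at hu ⊢
  rw [reassoc_of% hg, BraidedCategory.braiding_tensor_right_hom]
  simp only [whiskerLeft_comp, assoc]
  rw [reassoc_of% hu, reassoc_of% hβ, Iso.hom_inv_id]
  monoidal

end Legs

namespace RWMB

variable {A : C} {𝒴 : Set C} (S : RWMB A 𝒴)

theorem t₁_comp_piL1 : S.t₁ ≫ S.piL1 = S.m := by
  rw [piL1, ← assoc, S.ax3, ← S.hm₁]

/-- The map `d ⊗ (z ⊗ c) ↦ u (d₁ ⊗ z) d₂c`, where `t₁ (d ⊗ c) = d₁ ⊗ d₂c`. -/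
def pairFusion {Z : C} (u : A ⊗ Z ⟶ 𝟙_ C) : A ⊗ (Z ⊗ A) ⟶ A :=
  legs₁₃ S.t₁ Z ≫ (α_ A Z A).inv ≫ u ▷ A ≫ (λ_ A).hom

theorem pairFusion_whiskerLeft_comp {Z Z' : C} (f : Z' ⟶ Z) (u : A ⊗ Z ⟶ 𝟙_ C) :
    S.pairFusion (A ◁ f ≫ u) = A ◁ f ▷ A ≫ S.pairFusion u := by
  rw [pairFusion, pairFusion, ← assoc (A ◁ f ▷ A), legs₁₃_naturality]
  simp

theorem whiskerLeft_braiding_comp_pairFusion {Z : C} (u : A ⊗ Z ⟶ 𝟙_ C) :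
    (α_ A A Z).hom ≫ A ◁ (β_ A Z).hom ≫ S.pairFusion u = S.t₁ ▷ Z ≫ pairPast u A := by
  simp [pairFusion, legs₁₃, pairPast]

theorem whiskerLeft_piL1_comp_m : A ◁ S.piL1 ≫ S.m = S.pairFusion (S.m ≫ S.j) := by
  have h := S.ax8
  simp only [wl, ml, assoc] at h
  rw [← cancel_epi (A ◁ (β_ A A).hom)]
  simp [pairFusion, legs₁₃, piL1, h]

theorem legs₁₃_t₁_comp_ml_m_comp_j :
    legs₁₃ S.t₁ A ≫ ml S.m ≫ S.j ▷ A ≫ (λ_ A).hom = A ◁ S.piL1 ≫ S.m := by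
  simp [whiskerLeft_piL1_comp_m, pairFusion, ml]

theorem wl_t₁_comp_whiskerLeft_comp_j (g : A ⊗ A ⟶ A) :
    wl S.t₁ ≫ A ◁ g ≫ S.j ▷ A ≫ (λ_ A).hom = ml S.m ≫ g := by
  rw [wl_comp_whiskerLeft_comp_counit, ← S.hm₁]

-- Apply `j ⊗ j ⊗ 1` to Axiom I.
theorem m_assoc : A ◁ S.m ≫ S.m = (α_ A A A).inv ≫ S.m ▷ A ≫ S.m := by
  have hax1 : A ◁ S.t₁ ≫ legs₁₃ S.t₁ A ≫ wl S.t₁ = wl S.t₁ ≫ A ◁ S.t₁ := by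
    simpa [legs₁₃_eq_wl] using S.ax1
  calc A ◁ S.m ≫ S.m
      = A ◁ S.t₁ ≫ legs₁₃ S.t₁ A ≫ ml S.m ≫ S.j ▷ A ≫ (λ_ A).hom := by
        rw [legs₁₃_t₁_comp_ml_m_comp_j, ← whiskerLeft_comp_assoc, t₁_comp_piL1]
    _ = A ◁ S.t₁ ≫ legs₁₃ S.t₁ A ≫ wl S.t₁ ≫ A ◁ (S.j ▷ A ≫ (λ_ A).hom) ≫
          S.j ▷ A ≫ (λ_ A).hom := by rw [wl_t₁_comp_whiskerLeft_comp_j]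
    _ = wl S.t₁ ≫ A ◁ S.m ≫ S.j ▷ A ≫ (λ_ A).hom := by
        rw [reassoc_of% hax1, ← whiskerLeft_comp_assoc, ← S.hm₁]
    _ = (α_ A A A).inv ≫ S.m ▷ A ≫ S.m := by
        rw [wl_t₁_comp_whiskerLeft_comp_j, ml, assoc]

theorem braiding_hom_comp_m : (β_ A A).hom ≫ S.m = (β_ A A).inv ≫ S.m := by
  have ht₃ : S.t₃ ≫ S.j ▷ A ≫ (λ_ A).hom = (β_ A A).inv ≫ S.m := by
    rw [Iso.eq_inv_comp, ← S.hm₃]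
  apply S.ndr.hom_ext S.memI
  rw [← cancel_epi (α_ A A A).inv, ← cancel_epi (A ◁ (β_ A A).hom)]
  calc A ◁ (β_ A A).hom ≫ (α_ A A A).inv ≫ ((β_ A A).hom ≫ S.m) ▷ A ≫ S.m
      = A ◁ (β_ A A).hom ≫ (α_ A A A).inv ≫ (β_ A A).hom ▷ A ≫ (α_ A A A).hom ≫
          A ◁ S.m ≫ S.m := by simp [m_assoc]
    _ = ml S.m ≫ (β_ A A).hom ≫ S.m := by
        rw [ml, assoc, BraidedCategory.braiding_naturality_left_assoc,
          BraidedCategory.braiding_tensor_left_hom]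
        simp
    _ = A ◁ (β_ A A).hom ≫ wl S.t₃ ≫ A ◁ S.m ≫ S.j ▷ A ≫ (λ_ A).hom := by
        rw [← wl_t₁_comp_whiskerLeft_comp_j, whiskerLeft_comp, assoc, reassoc_of% S.hc13]
    _ = A ◁ (β_ A A).hom ≫ (α_ A A A).inv ≫ ((β_ A A).inv ≫ S.m) ▷ A ≫ S.m := by
        rw [wl_comp_whiskerLeft_comp_counit, ht₃, ml, assoc]

theorem ml_piL2_comp_m : ml S.piL2 ≫ S.m = A ◁ S.piL1 ≫ S.m := by
  have hβ : wl (β_ A A).hom ≫ ml S.m = wl (β_ A A).inv ≫ ml S.m := by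
    simp only [wl, ml, assoc, Iso.hom_inv_id_assoc, ← comp_whiskerRight, braiding_hom_comp_m]
  calc ml S.piL2 ≫ S.m
      = wl (β_ A A).hom ≫ ml (S.t₄ ≫ S.j ▷ A ≫ (λ_ A).hom) ≫ S.m := by simp [wl, ml, piL2]
    _ = wl (β_ A A).hom ≫ A ◁ S.t₁ ≫ wl (β_ A A).hom ≫ ml S.m ≫ S.j ▷ A ≫ (λ_ A).hom := by
        rw [← wl_comp_whiskerLeft_comp_counit, ← reassoc_of% S.hc14]
    _ = legs₁₃ S.t₁ A ≫ ml S.m ≫ S.j ▷ A ≫ (λ_ A).hom := by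
        simp only [reassoc_of% hβ, legs₁₃_eq_wl, assoc]
    _ = A ◁ S.piL1 ≫ S.m := S.legs₁₃_t₁_comp_ml_m_comp_j

-- `(a ⊓ᴸ₂(b ⊗ c)) d = a (b ⊓ᴸ₁(c ⊗ d)) = (ab) ⊓ᴸ₁(c ⊗ d) = ⊓ᴸ₂(ab ⊗ c) d`
theorem whiskerLeft_piL2_comp_m : A ◁ S.piL2 ≫ S.m = ml S.m ≫ S.piL2 := by
  have hassoc : S.m ▷ A ≫ S.m = (α_ A A A).hom ≫ A ◁ S.m ≫ S.m := by simp [m_assoc]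
  have hpiL2 : S.piL2 ▷ A ≫ S.m = (α_ A A A).hom ≫ A ◁ S.piL1 ≫ S.m := by
    simp [← ml_piL2_comp_m, ml]
  apply S.ndr.hom_ext S.memI
  calc (A ◁ S.piL2 ≫ S.m) ▷ A ≫ S.m
      = (α_ A (A ⊗ A) A).hom ≫ A ◁ (S.piL2 ▷ A ≫ S.m) ≫ S.m := by simp [hassoc]
    _ = (α_ A (A ⊗ A) A).hom ≫ A ◁ (α_ A A A).hom ≫ A ◁ A ◁ S.piL1 ≫ A ◁ S.m ≫ S.m := by
        simp [hpiL2]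
    _ = (α_ A (A ⊗ A) A).hom ≫ A ◁ (α_ A A A).hom ≫ (α_ A A (A ⊗ A)).inv ≫
          S.m ▷ (A ⊗ A) ≫ A ◁ S.piL1 ≫ S.m := by
        rw [m_assoc, associator_inv_naturality_right_assoc, whisker_exchange_assoc]
    _ = (ml S.m ≫ S.piL2) ▷ A ≫ S.m := by simp [ml, hpiL2]

theorem piL2_comp_j : S.piL2 ≫ S.j = S.m ≫ S.j := by
  have hj : (S.j ▷ A ≫ (λ_ A).hom) ≫ S.j = (A ◁ S.j ≫ (ρ_ A).hom) ≫ S.j := by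
    rw [assoc, assoc, ← leftUnitor_naturality, ← rightUnitor_naturality, whisker_exchange_assoc,
      unitors_equal]
  simp only [assoc] at hj
  simp only [S.hm₄, piL2, assoc, hj]

section Quotient

variable {S} {L : C} {p : A ⟶ L} {n₁ : L ⊗ A ⟶ A} {n₂ : A ⊗ L ⟶ A}

theorem piL2_comp_quotient (hn₁ : p ▷ A ≫ n₁ = S.piL1) (hndn₁ : NdRightOn n₁ 𝒴) :
    S.piL2 ≫ p = S.m ≫ p := by
  have hpair (f : A ⊗ A ⟶ A) :
      A ◁ ((f ≫ p) ▷ A ≫ n₁) ≫ S.m = S.pairFusion (A ◁ f ≫ S.m ≫ S.j) := by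
    rw [pairFusion_whiskerLeft_comp, ← whiskerLeft_piL1_comp_m, ← hn₁]
    simp
  apply hndn₁.hom_ext S.memI
  apply S.ndl.hom_ext S.memI
  rw [hpair, hpair, reassoc_of% S.whiskerLeft_piL2_comp_m, piL2_comp_j, reassoc_of% S.m_assoc,
    ml, assoc]

theorem whiskerLeft_quotient_comp_action (hn₁ : p ▷ A ≫ n₁ = S.piL1) (hndn₁ : NdRightOn n₁ 𝒴)
    (hn₂ : A ◁ p ≫ n₂ = S.piL2) : A ◁ p ≫ n₂ ≫ p = S.m ≫ p := by
  rw [reassoc_of% hn₂, piL2_comp_quotient hn₁ hndn₁]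

theorem whiskerLeft_quotient_comp_pairing (hn₂ : A ◁ p ≫ n₂ = S.piL2) :
    A ◁ p ≫ n₂ ≫ S.j = S.m ≫ S.j := by
  rw [reassoc_of% hn₂, piL2_comp_j]

theorem whiskerLeft_comp_m_eq_pairFusion [Epi ((A ⊗ A) ◁ p)] (hn₁ : p ▷ A ≫ n₁ = S.piL1)
    (hn₂ : A ◁ p ≫ n₂ = S.piL2) : A ◁ n₁ ≫ S.m = S.pairFusion (n₂ ≫ S.j) := by
  have hp : A ◁ p ▷ A = A ◁ (β_ A A).inv ≫ (α_ A A A).inv ≫ (A ⊗ A) ◁ p ≫ (α_ A A L).hom ≫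
      A ◁ (β_ A L).hom := by
    simp [← whiskerLeft_comp]
  have : Epi (A ◁ p ▷ A) := hp ▸ inferInstance
  rw [← cancel_epi (A ◁ p ▷ A), ← whiskerLeft_comp_assoc, hn₁, whiskerLeft_piL1_comp_m,
    ← pairFusion_whiskerLeft_comp, whiskerLeft_quotient_comp_pairing hn₂]

theorem actFst_m_actFst {X Y : C} {u : A ⊗ L ⟶ 𝟙_ C} (hu : A ◁ n₁ ≫ S.m = S.pairFusion u)
    (g : X ⟶ L ⊗ Y) : actFst S.m (actFst ((β_ A L).hom ≫ n₁) g) =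
      (α_ A A X).inv ≫ S.t₁ ▷ X ≫ actFst (pairPast u A) g := by
  rw [actFst_actFst, whiskerLeft_comp, assoc, hu, whiskerLeft_braiding_comp_pairFusion,
    actFst_whiskerRight_comp]

theorem ndLeftOn_action [Epi ((A ⊗ A) ◁ p)] [∀ X : C, Epi (S.m ▷ X)]
    (hn₁ : p ▷ A ≫ n₁ = S.piL1) (hndn₁ : NdRightOn n₁ 𝒴) (hn₂ : A ◁ p ≫ n₂ = S.piL2) :
    NdLeftOn (n₂ ≫ p) 𝒴 := by
  have hbal : A ◁ (n₂ ≫ p) ≫ n₂ ≫ S.j = (α_ A A L).inv ≫ S.m ▷ L ≫ n₂ ≫ S.j :=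
    comp_balanced_of_epi S.m_assoc (whiskerLeft_quotient_comp_action hn₁ hndn₁ hn₂)
      (whiskerLeft_quotient_comp_pairing hn₂)
  have hpair {X Y : C} (g : X ⟶ L ⊗ Y) : actFst (n₂ ≫ S.j) (actFst (n₂ ≫ p) g) =
      (α_ A A X).inv ≫ S.m ▷ X ≫ actFst (n₂ ≫ S.j) g := by
    rw [actFst_actFst, hbal, Iso.hom_inv_id_assoc, actFst_whiskerRight_comp]
  intro X Y hY g h (hgh : actFst (n₂ ≫ p) g = actFst (n₂ ≫ p) h)
  have hgh_pair : actFst (n₂ ≫ S.j) g = actFst (n₂ ≫ S.j) h := by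
    rw [← cancel_epi (S.m ▷ X), ← cancel_epi (α_ A A X).inv, ← hpair, ← hpair, hgh]
  have hn₁_pair := whiskerLeft_comp_m_eq_pairFusion hn₁ hn₂
  apply NdLeftOn.actFst_injective hndn₁ hY
  apply S.ndl.actFst_injective hY
  rw [actFst_m_actFst hn₁_pair, actFst_m_actFst hn₁_pair, actFst_pairPast, actFst_pairPast,
    hgh_pair]

end Quotient

end RWMB

theorem base_object_is_module_general {A : C} {𝒴 : Set C} (S : RWMB A 𝒴) {L : C} {p : A ⟶ L}
    (hp : ∀ X : C, Epi (X ◁ p)) (hm : ∀ X : C, Epi (S.m ▷ X))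
    (hmp : Nonempty (RegularEpi (S.m ≫ p)))
    {n₁ : L ⊗ A ⟶ A} (hn₁ : p ▷ A ≫ n₁ = S.piL1) (hndn₁ : NdRightOn n₁ 𝒴)
    {n₂ : A ⊗ L ⟶ A} (hn₂ : A ◁ p ≫ n₂ = S.piL2) :
    (A ◁ (n₂ ≫ p) ≫ n₂ ≫ p = (α_ A A L).inv ≫ S.m ▷ L ≫ n₂ ≫ p) ∧
      Nonempty (RegularEpi (n₂ ≫ p)) ∧ NdLeftOn (n₂ ≫ p) 𝒴 := by
  have hact := RWMB.whiskerLeft_quotient_comp_action hn₁ hndn₁ hn₂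
  have : IsRegularEpi (A ◁ p ≫ n₂ ≫ p) := hact ▸ ⟨hmp⟩
  exact ⟨comp_balanced_of_epi S.m_assoc hact hact,
    (isRegularEpi_of_comp (A ◁ p) (n₂ ≫ p)).regularEpi,
    RWMB.ndLeftOn_action hn₁ hndn₁ hn₂⟩

/-- Proposition 4.4: the base object `L` is a module over the semigroup
`A` via the action `p ∘ n₂ : A ⊗ L ⟶ L`: this action is associative, a regular
epimorphism, and non-degenerate on the left with respect to `𝒴`. -/
theorem base_object_is_module
    [HasCoequalizers C]
    (presL : ∀ X : C, PreservesColimitsOfShape WalkingParallelPair (tensorLeft X))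
    (presR : ∀ X : C, PreservesColimitsOfShape WalkingParallelPair (tensorRight X))
    (regcomp : ∀ {X Y Z : C} (f : X ⟶ Y) (g : Y ⟶ Z),
      Nonempty (RegularEpi f) → Nonempty (RegularEpi g) → Nonempty (RegularEpi (f ≫ g)))
    {A : C} {𝒴 : Set C} (S : RWMB A 𝒴)
    (hmreg : Nonempty (RegularEpi S.m))
    (L : C) (p : A ⟶ L)
    (hpc : S.piL1 ≫ p = S.piBarR1c ≫ p)
    (hpu : ∀ {X : C} (h : A ⟶ X), S.piL1 ≫ h = S.piBarR1c ≫ h →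
      ∃! k : L ⟶ X, p ≫ k = h)
    (memL : L ∈ 𝒴)
    (n₁ : L ⊗ A ⟶ A) (hn₁ : (p ▷ A) ≫ n₁ = S.piL1)
    (hndn₁ : NdRightOn n₁ 𝒴)
    (n₂ : A ⊗ L ⟶ A) (hn₂ : (A ◁ p) ≫ n₂ = S.piL2) :
    -- the action `p ∘ n₂` is associative ...
    ((A ◁ (n₂ ≫ p)) ≫ (n₂ ≫ p) = (α_ A A L).inv ≫ (S.m ▷ L) ≫ (n₂ ≫ p)) ∧
    -- ... a regular epimorphism ...
    Nonempty (RegularEpi (n₂ ≫ p)) ∧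
    -- ... and non-degenerate on the left with respect to `𝒴`
    NdLeftOn (n₂ ≫ p) 𝒴 := by
  have hp := isRegularEpi_of_existsUnique hpc hpu
  have hm : IsRegularEpi S.m := ⟨hmreg⟩
  exact base_object_is_module_general S
    (fun X ↦ (isRegularEpi_map (tensorLeft X) p).getStruct.epi)
    (fun X ↦ (isRegularEpi_map (tensorRight X) S.m).getStruct.epi)
    (regcomp S.m p hmreg hp.regularEpi) hn₁ hndn₁ hn₂

end WeakMultiplierBimonoid
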